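/- arXiv:1812.08397 — 2 statements merged into one kernel-verified Lean document; each statement's English description precedes it below -/
import Mathlib

section
/- Let n ≥ 2 be an integer and S : (L^0)^n → (L^0)^n an injective map with the local property satisfying S(θ) = θ. If x ∈ (L^0)^n has full support, then S(x) has full support. -/
/-!
Statements from "The fundamental theorem of affine geometry in `(L⁰)ⁿ`" (Wu–Long).

`L⁰`, the algebra of equivalence classes (under `P`-a.e. equality) of real valued
random variables on a probability space `(Ω, F, P)`, is modeled as `Ω →ₘ[P] ℝ`,
and `(L⁰)ⁿ` as `Fin n → (Ω →ₘ[P] ℝ)` with the pointwise `L⁰`-module structure.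
-/

open MeasureTheory

noncomputable section

variable {Ω : Type*} [MeasurableSpace Ω] {P : Measure Ω}

/-- `L⁰ = Ω →ₘ[P] ℝ` is a commutative ring under the pointwise a.e. operations. -/
instance : CommRing (Ω →ₘ[P] ℝ) :=
  { (inferInstance : AddCommGroup (Ω →ₘ[P] ℝ)),
    (inferInstance : CommMonoid (Ω →ₘ[P] ℝ)) with
    left_distrib := fun a b c => AEEqFun.toGerm_injective <| by
      simp only [AEEqFun.mul_toGerm, AEEqFun.add_toGerm, mul_add]
    right_distrib := fun a b c => AEEqFun.toGerm_injective <| by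
      simp only [AEEqFun.mul_toGerm, AEEqFun.add_toGerm, add_mul]
    zero_mul := fun a => AEEqFun.toGerm_injective <| by
      simp only [AEEqFun.mul_toGerm, AEEqFun.zero_toGerm, zero_mul]
    mul_zero := fun a => AEEqFun.toGerm_injective <| by
      simp only [AEEqFun.mul_toGerm, AEEqFun.zero_toGerm, mul_zero] }

/-- `Ĩ_A` : the equivalence class of the indicator function of a measurable set `A`. -/
def ind (P : Measure Ω) {A : Set Ω} (hA : MeasurableSet A) : Ω →ₘ[P] ℝ :=
  AEEqFun.mk (A.indicator fun _ => (1 : ℝ)) (aestronglyMeasurable_const.indicator hA)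

theorem ind_add_compl' (P : Measure Ω) {A : Set Ω} (hA : MeasurableSet A) :
    ind P hA + ind P hA.compl = 1 := by
  unfold ind
  rw [AEEqFun.mk_add_mk, AEEqFun.one_def, AEEqFun.mk_eq_mk]
  refine Filter.Eventually.of_forall fun w => ?_
  by_cases h : w ∈ A <;> simp [h]

theorem ind_compl_mul' (P : Measure Ω) {A : Set Ω} (hA : MeasurableSet A) :
    ind P hA.compl * ind P hA = 0 := by
  unfold ind
  rw [AEEqFun.mk_mul_mk, AEEqFun.zero_def, AEEqFun.mk_eq_mk]
  refine Filter.Eventually.of_forall fun w => ?_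
  by_cases h : w ∈ A <;> simp [h]

/-- from Step 1 of the proof of Theorem 3.1: an injective map
`S : (L⁰)ⁿ → (L⁰)ⁿ` with the local property and `S 0 = 0` maps elements with full
support to elements with full support. -/
theorem image_has_full_support
    [IsProbabilityMeasure P] (n : ℕ) (hn : 2 ≤ n)
    (S : (Fin n → Ω →ₘ[P] ℝ) → (Fin n → Ω →ₘ[P] ℝ))
    (hinj : Function.Injective S)
    (hloc : ∀ (x : Fin n → Ω →ₘ[P] ℝ) (A : Set Ω) (hA : MeasurableSet A),
        ind P hA • S (ind P hA • x) = ind P hA • S x)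
    (hS0 : S 0 = 0)
    (x : Fin n → Ω →ₘ[P] ℝ)
    (hx : ∀ (A : Set Ω) (hA : MeasurableSet A), ind P hA • x = 0 → P A = 0) :
    ∀ (A : Set Ω) (hA : MeasurableSet A), ind P hA • S x = 0 → P A = 0 := by
  intro A hA h
  apply hx A hA
  apply hinj
  rw [hS0]
  have h1 := hloc x A hA
  rw [h] at h1
  have h2 := hloc (ind P hA • x) Aᶜ hA.compl
  have h3 : ind P hA.compl • (ind P hA • x) = 0 := by
    rw [smul_smul, ind_compl_mul', zero_smul]
  rw [h3, hS0, smul_zero] at h2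
  rw [← one_smul (Ω →ₘ[P] ℝ) (S (ind P hA • x)), ← ind_add_compl' P hA, add_smul, h1, ← h2,
    add_zero]
end
end

section
/- For an integer n ≥ 2, if T : (L^0)^n → (L^0)^n is a bijection which has the local property and maps each L^0-line segment onto an L^0-line segment (for any two distinct x, y ∈ (L^0)^n, the image of [x,y] under T equals [T(x), T(y)]), then T is an L^0-affine linear map. -/
/-!
Statements from "The fundamental theorem of affine geometry in `(L⁰)ⁿ`" (Wu–Long).

`L⁰`, the algebra of equivalence classes (under `P`-a.e. equality) of real valued
random variables on a probability space `(Ω, F, P)`, is modeled as `Ω →ₘ[P] ℝ`,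
and `(L⁰)ⁿ` as `Fin n → (Ω →ₘ[P] ℝ)` with the pointwise `L⁰`-module structure.
-/

open MeasureTheory

noncomputable section

variable {Ω : Type*} [MeasurableSpace Ω] {P : Measure Ω}

section Abstract

variable {R M : Type*} [CommRing R] [Lattice R] [AddCommGroup M] [Module R M]

structure RFacts (R : Type*) [CommRing R] [Lattice R] : Prop where
  reg : ∀ a : R, ∃ t, a * t * a = a
  split : ∀ a c : R, ∃ e, e * e = e ∧ e * a = e * (a ⊔ c) ∧ (1 - e) * a = (1 - e) * (a ⊓ c)
  inv : ∀ a : R, 1 ≤ a → ∃ k, 0 ≤ k ∧ k ≤ 1 ∧ k * a = 1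
  half : ∃ h : R, 0 ≤ h ∧ h ≤ 1 ∧ h + h = 1
  neg : ∀ a : R, a ≤ 0 → 1 ≤ 1 - a
  zero_le_one : (0 : R) ≤ 1

structure Good (R : Type*) {M : Type*} [CommRing R] [Lattice R] [AddCommGroup M] [Module R M]
    (T S : M → M) : Prop where
  st : ∀ x, S (T x) = x
  ts : ∀ x, T (S x) = x
  loc : ∀ (e : R) x y, e * e = e → e • x = e • y → e • T x = e • T y
  seg : ∀ (x d : M) (l : R), 0 ≤ l → l ≤ 1 → ∃ m : R, T (x + l • d) = T x + m • (T (x + d) - T x)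
  seg' : ∀ (x d : M) (l : R), 0 ≤ l → l ≤ 1 → ∃ m : R, S (x + l • d) = S x + m • (S (x + d) - S x)

theorem Good.locinv {T S : M → M} (g : Good R T S) (e : R) (x y : M) (he : e * e = e)
    (h : e • T x = e • T y) : e • x = e • y := by
  have h1 : e • T (e • x + (1 - e) • y) = e • T x :=
    g.loc e _ _ he (by linear_combination (norm := module) he • (x - y))
  have h2 : (1 - e) • T (e • x + (1 - e) • y) = (1 - e) • T y :=
    g.loc (1 - e) _ _ (by linear_combination he) (by linear_combination (norm := module) he • (y - x))
  have h3 : T (e • x + (1 - e) • y) = T y := by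
    linear_combination (norm := module) h1 + h2 + h
  have h4 : e • x + (1 - e) • y = y := by
    rw [← g.st (e • x + (1 - e) • y), h3, g.st]
  linear_combination (norm := module) h4

theorem Good.symm {T S : M → M} (g : Good R T S) : Good R S T where
  st := g.ts
  ts := g.st
  loc e x y he h := g.locinv e _ _ he (by rw [g.ts, g.ts, h])
  seg := g.seg'
  seg' := g.seg

theorem Good.trans {T S : M → M} (g : Good R T S) (x : M) :
    Good R (fun v => T (x + v) - T x) (fun w => S (w + T x) - x) where
  st v := by simp [g.st]
  ts v := by simp [g.ts]
  loc e u v he h := by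
    have := g.loc e (x + u) (x + v) he (by rw [smul_add, smul_add, h])
    simp only [smul_sub, this]
  seg u d l h0 h1 := by
    obtain ⟨m, hm⟩ := g.seg (x + u) d l h0 h1
    refine ⟨m, ?_⟩
    simp only [← add_assoc]
    rw [hm]; module
  seg' u d l h0 h1 := by
    obtain ⟨m, hm⟩ := g.seg' (u + T x) d l h0 h1
    refine ⟨m, ?_⟩
    rw [show u + l • d + T x = u + T x + l • d by abel, hm,
      show u + d + T x = u + T x + d by abel]; module

theorem line_ge (F : RFacts R) {T S : M → M} (g : Good R T S) (x d : M) (l : R) (hl : 1 ≤ l) :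
    ∃ m : R, T (x + l • d) = T x + m • (T (x + d) - T x) := by
  obtain ⟨k, k0, k1, hk⟩ := F.inv l hl
  obtain ⟨v, hv⟩ := g.seg x (l • d) k k0 k1
  rw [smul_smul, hk, one_smul] at hv
  obtain ⟨r, hr⟩ := F.reg v
  have he : (v * r) * (v * r) = v * r := by linear_combination r * hr
  have he' : (1 - v * r) * (1 - v * r) = 1 - v * r := by linear_combination he
  have h1 : (1 - v * r) • T (x + d) = (1 - v * r) • T x := by
    rw [hv]; linear_combination (norm := module) (-hr) • (T (x + l • d) - T x)
  have h2 := g.locinv _ _ _ he' h1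
  have h3 : (1 - v * r) • (x + l • d) = (1 - v * r) • x := by
    linear_combination (norm := module) l • h2
  have h4 := g.loc _ _ _ he' h3
  refine ⟨r, ?_⟩
  rw [hv]
  linear_combination (norm := module) h4

theorem line_glue {T S : M → M} (g : Good R T S) (x d : M) (l l1 l2 e : R)
    (he : e * e = e) (h1 : e * l = e * l1) (h2 : (1 - e) * l = (1 - e) * l2)
    (H1 : ∃ m : R, T (x + l1 • d) = T x + m • (T (x + d) - T x))
    (H2 : ∃ m : R, T (x + l2 • d) = T x + m • (T (x + d) - T x)) :
    ∃ m : R, T (x + l • d) = T x + m • (T (x + d) - T x) := by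
  obtain ⟨m1, H1⟩ := H1
  obtain ⟨m2, H2⟩ := H2
  have a1 := g.loc e (x + l • d) (x + l1 • d) he (by linear_combination (norm := module) h1 • d)
  have a2 := g.loc (1 - e) (x + l • d) (x + l2 • d) (by linear_combination he)
    (by linear_combination (norm := module) h2 • d)
  refine ⟨e * m1 + (1 - e) * m2, ?_⟩
  linear_combination (norm := module) a1 + a2 + e • H1 + (1 - e) • H2

theorem line (F : RFacts R) {T S : M → M} (g : Good R T S) (x d : M) (l : R) :
    ∃ m : R, T (x + l • d) = T x + m • (T (x + d) - T x) := by
  have hpos : ∀ l : R, 0 ≤ l → ∃ m : R, T (x + l • d) = T x + m • (T (x + d) - T x) := by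
    intro l hl
    obtain ⟨e, he, h1, h2⟩ := F.split l 1
    exact line_glue g x d l _ _ e he h1 h2 (line_ge F g x d _ le_sup_right)
      (g.seg x d _ (le_inf hl F.zero_le_one) inf_le_right)
  have hneg : ∀ l : R, l ≤ 0 → ∃ m : R, T (x + l • d) = T x + m • (T (x + d) - T x) := by
    intro l hl
    obtain ⟨m, hm⟩ := line_ge F g (x + d) (-d) (1 - l) (F.neg l hl)
    rw [show x + d + (1 - l) • (-d) = x + l • d by module,
      show x + d + -d = x by module] at hm
    refine ⟨1 - m, ?_⟩
    rw [hm]; module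
  obtain ⟨e, he, h1, h2⟩ := F.split l 0
  exact line_glue g x d l _ _ e he h1 h2 (hpos _ le_sup_right) (hneg _ inf_le_right)

/-- independence -/
def Indep2 (R : Type*) {M : Type*} [CommRing R] [AddCommGroup M] [Module R M] (d z : M) : Prop :=
  ∀ a b : R, a • d + b • z = 0 → a = 0 ∧ b = 0

theorem para_coeff (F : RFacts R) {T S : M → M} (g : Good R T S) (T0 : T 0 = 0) (d z : M)
    (hi : Indep2 R d z) (a b : R) (h : T (d + z) = a • T d + b • T z) : a = 1 := by
  have S0 : S 0 = 0 := by simpa [T0] using g.st 0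
  obtain ⟨t, ht⟩ := F.reg (a - 1)
  have he : ((a - 1) * t) * ((a - 1) * t) = (a - 1) * t := by linear_combination t * ht
  obtain ⟨s, hs⟩ := line F g.symm (T d) (T (d + z) - T d) (-t)
  rw [add_sub_cancel, g.st, g.st, add_sub_cancel_left] at hs
  obtain ⟨r, hr⟩ := line F g.symm 0 (T z) (-t * b)
  simp only [zero_add, S0, sub_zero, g.st] at hr
  have h1 := g.symm.loc ((a - 1) * t) (T d + (-t) • (T (d + z) - T d)) ((-t * b) • T z) he (by
    rw [h]; linear_combination (norm := module) (-t * ht) • T d)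
  rw [hs, hr] at h1
  have h2 := (hi ((a - 1) * t) ((a - 1) * t * (s - r)) (by
    linear_combination (norm := module) h1)).1
  linear_combination (a - 1) * h2 - ht

theorem para0 (F : RFacts R) {T S : M → M} (g : Good R T S) (T0 : T 0 = 0) (d z : M)
    (hi : Indep2 R d z) : T (d + z) = T d + T z := by
  obtain ⟨h, h0, h1, hh⟩ := F.half
  obtain ⟨p, hp⟩ := line F g 0 d 2
  obtain ⟨q, hq⟩ := line F g 0 z 2
  simp only [zero_add, T0, sub_zero] at hp hq
  obtain ⟨m, hm⟩ := g.seg ((2 : R) • d) ((2 : R) • z - (2 : R) • d) h h0 h1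
  rw [show (2 : R) • d + h • ((2 : R) • z - (2 : R) • d) = d + z by
    linear_combination (norm := module) hh • (z - d), add_sub_cancel, hp, hq] at hm
  have key : T (d + z) = ((1 - m) * p) • T d + (m * q) • T z := by rw [hm]; module
  have e1 := para_coeff F g T0 d z hi _ _ key
  have e2 := para_coeff F g T0 z d (fun a b hab => (hi b a (by rw [add_comm]; exact hab)).symm)
    (m * q) ((1 - m) * p) (by rw [add_comm, key, add_comm])
  rw [key, e1, e2, one_smul, one_smul]

theorem para (F : RFacts R) {T S : M → M} (g : Good R T S) (x d z : M)
    (hi : Indep2 R d z) : T (x + d + z) = T (x + d) + T (x + z) - T x := by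
  have := para0 F (g.trans x) (by simp) d z hi
  simp only [← add_assoc] at this
  linear_combination (norm := module) this

theorem mid_indep (F : RFacts R) {T S : M → M} (g : Good R T S) (x d z : M)
    (hi : Indep2 R d z) : T (x + d + d) - T (x + d) - T (x + d) + T x = 0 := by
  have h1 := para F g x d z hi
  have h2 := para F g (x + d) d (z - d) (fun a b hab => by
    obtain ⟨h, h'⟩ := hi (a - b) b (by linear_combination (norm := module) hab)
    exact ⟨by linear_combination h + h', h'⟩)
  rw [show x + d + d + (z - d) = x + d + z by abel, show x + d + (z - d) = x + z by abel] at h2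
  linear_combination (norm := module) h1 - h2

theorem mid {n : ℕ} (hn : 2 ≤ n) (F : RFacts R) {T S : (Fin n → R) → (Fin n → R)}
    (g : Good R T S) (x d : Fin n → R) :
    T (x + d + d) - T (x + d) - T (x + d) + T x = 0 := by
  choose t ht using fun i => F.reg (d i)
  have he : ∀ i, (d i * t i) * (d i * t i) = d i * t i := fun i => by
    linear_combination t i * ht i
  have key : ∀ i, (d i * t i) • (T (x + d + d) - T (x + d) - T (x + d) + T x) = 0 := by
    intro i
    have : Nontrivial (Fin n) := Fin.nontrivial_iff_two_le.mpr hn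
    obtain ⟨j, hj⟩ := exists_ne i
    set e := d i * t i with hedef
    have hee : e * e = e := he i
    obtain ⟨d', hd'⟩ : ∃ d' : Fin n → R, d' = e • d + (1 - e) • Pi.single i 1 := ⟨_, rfl⟩
    have hdd : e • d' = e • d := by
      rw [hd']
      linear_combination (norm := module) hee • (d - Pi.single i (1 : R))
    have hind : Indep2 R d' (Pi.single j (1 : R) : Fin n → R) := by
      intro a b hab
      have hi := congrFun hab i
      have hjj := congrFun hab j
      simp [hd', hj, hj.symm] at hi hjj
      have ha : a = 0 := by
        have : a * ((e * d i + (1 - e)) * (e * t i + (1 - e))) = 0 := by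
          linear_combination (e * t i + (1 - e)) * hi
        have h2 : (e * d i + (1 - e)) * (e * t i + (1 - e)) = 1 := by
          have : d i * t i = e := rfl
          linear_combination e * e * this + (e + 2 - d i - t i) * hee
        rw [h2, mul_one] at this
        exact this
      subst ha
      simpa using hjj
    have hm := mid_indep F g x d' _ hind
    have l1 := g.loc e (x + d') (x + d) hee (by rw [smul_add, smul_add, hdd])
    have l2 := g.loc e (x + d' + d') (x + d + d) hee (by simp only [smul_add, hdd])
    linear_combination (norm := module) e • hm + (2 : R) • l1 - l2
  have hprod : ∀ s : Finset (Fin n), (∏ i ∈ s, (1 - d i * t i)) •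
      (T (x + d + d) - T (x + d) - T (x + d) + T x) =
      (T (x + d + d) - T (x + d) - T (x + d) + T x) := by
    intro s
    induction s using Finset.induction_on with
    | empty => simp
    | insert i s hi ih =>
      rw [Finset.prod_insert hi, mul_smul, ih, sub_smul, one_smul, key, sub_zero]
  set f := ∏ i, (1 - d i * t i) with hf
  have hff : f * f = f := by
    rw [hf, ← Finset.prod_mul_distrib]
    exact Finset.prod_congr rfl fun i _ => by linear_combination he i
  have hfd : f • d = 0 := by
    funext i
    have : (1 - d i * t i) ∣ f := Finset.dvd_prod_of_mem _ (Finset.mem_univ i)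
    obtain ⟨c, hc⟩ := this
    simp only [Pi.smul_apply, smul_eq_mul, Pi.zero_apply]
    rw [hc]; linear_combination -c * ht i
  have l1 := g.loc f (x + d) x hff (by rw [smul_add, hfd, add_zero])
  have l2 := g.loc f (x + d + d) x hff (by rw [smul_add, smul_add, hfd, add_zero, add_zero])
  rw [← hprod Finset.univ, ← hf]
  linear_combination (norm := module) l2 - (2 : R) • l1

theorem additive {n : ℕ} (hn : 2 ≤ n) (F : RFacts R) {T S : (Fin n → R) → (Fin n → R)}
    (g : Good R T S) (u v : Fin n → R) :
    T (u + v) - T 0 = (T u - T 0) + (T v - T 0) := by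
  obtain ⟨h, -, -, hh⟩ := F.half
  have h1 := mid hn F g 0 u
  have h2 := mid hn F g 0 v
  have h3 := mid hn F g (u + u) (v - u)
  rw [show u + u + (v - u) + (v - u) = v + v by abel, show u + u + (v - u) = u + v by abel] at h3
  simp only [zero_add] at h1 h2
  linear_combination (norm := module) h • (h1 + h2 - h3) - hh • (T (u + v) - T u - T v + T 0)

end Abstract

section Concrete

theorem L0_facts : RFacts (Ω →ₘ[P] ℝ) where
  reg a := by
    refine ⟨a.compMeasurable (fun x => x⁻¹) measurable_inv, ?_⟩
    apply AEEqFun.ext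
    filter_upwards [AEEqFun.coeFn_mul (a * a.compMeasurable (fun x => x⁻¹) measurable_inv) a,
      AEEqFun.coeFn_mul a (a.compMeasurable (fun x => x⁻¹) measurable_inv),
      AEEqFun.coeFn_compMeasurable (fun x => x⁻¹) measurable_inv a] with w h1 h2 h3
    simp only [h1, Pi.mul_apply, h2, h3, Function.comp]
    exact mul_inv_mul_cancel _
  split a c := by
    have hA : MeasurableSet {w | c w ≤ a w} := measurableSet_le c.measurable a.measurable
    refine ⟨ind P hA, ?_, ?_, ?_⟩
    · apply AEEqFun.ext
      filter_upwards [AEEqFun.coeFn_mul (ind P hA) (ind P hA), AEEqFun.coeFn_mk (μ := P)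
        ({w | c w ≤ a w}.indicator fun _ => (1 : ℝ)) (aestronglyMeasurable_const.indicator hA)]
        with w h1 h2
      rw [h1, Pi.mul_apply, ind, h2]
      by_cases h : c w ≤ a w <;> simp [Set.indicator, h]
    · apply AEEqFun.ext
      filter_upwards [AEEqFun.coeFn_mul (ind P hA) a, AEEqFun.coeFn_mul (ind P hA) (a ⊔ c),
        AEEqFun.coeFn_sup a c, AEEqFun.coeFn_mk (μ := P)
        ({w | c w ≤ a w}.indicator fun _ => (1 : ℝ)) (aestronglyMeasurable_const.indicator hA)]
        with w h1 h3 h4 h2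
      rw [h1, h3, Pi.mul_apply, Pi.mul_apply, ind, h2, h4]
      by_cases h : c w ≤ a w <;> simp [Set.indicator, h]
    · apply AEEqFun.ext
      filter_upwards [AEEqFun.coeFn_mul (1 - ind P hA) a, AEEqFun.coeFn_mul (1 - ind P hA) (a ⊓ c),
        AEEqFun.coeFn_sub 1 (ind P hA), AEEqFun.coeFn_one (μ := P) (β := ℝ) (α := Ω),
        AEEqFun.coeFn_inf a c, AEEqFun.coeFn_mk (μ := P)
        ({w | c w ≤ a w}.indicator fun _ => (1 : ℝ)) (aestronglyMeasurable_const.indicator hA)]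
        with w h1 h3 h5 h6 h4 h2
      rw [h1, h3, Pi.mul_apply, Pi.mul_apply, h5, Pi.sub_apply, h6, ind, h2, h4]
      by_cases h : c w ≤ a w
      · simp [Set.indicator, h]
      · simp [Set.indicator, h, (not_le.mp h).le]
  inv a ha := by
    have ha' := AEEqFun.coeFn_le.mpr ha
    refine ⟨a.compMeasurable (fun x => x⁻¹) measurable_inv, ?_, ?_, ?_⟩
    · rw [← AEEqFun.coeFn_le]
      filter_upwards [ha', AEEqFun.coeFn_one (μ := P) (β := ℝ) (α := Ω),
        AEEqFun.coeFn_zero (μ := P) (β := ℝ) (α := Ω),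
        AEEqFun.coeFn_compMeasurable (fun x => x⁻¹) measurable_inv a] with w h1 h2 h3 h4
      rw [h2] at h1
      rw [h3, h4]
      simp only [Pi.one_apply, Pi.zero_apply, Function.comp] at *
      positivity
    · rw [← AEEqFun.coeFn_le]
      filter_upwards [ha', AEEqFun.coeFn_one (μ := P) (β := ℝ) (α := Ω),
        AEEqFun.coeFn_compMeasurable (fun x => x⁻¹) measurable_inv a] with w h1 h2 h4
      rw [h2] at h1
      rw [h2, h4]
      simp only [Pi.one_apply, Function.comp] at *
      exact inv_le_one_of_one_le₀ h1
    · apply AEEqFun.ext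
      filter_upwards [ha', AEEqFun.coeFn_one (μ := P) (β := ℝ) (α := Ω),
        AEEqFun.coeFn_mul (a.compMeasurable (fun x => x⁻¹) measurable_inv) a,
        AEEqFun.coeFn_compMeasurable (fun x => x⁻¹) measurable_inv a] with w h1 h2 h3 h4
      rw [h2] at h1
      rw [h2, h3, Pi.mul_apply, h4]
      simp only [Pi.one_apply, Function.comp] at *
      exact inv_mul_cancel₀ (by positivity)
  half := by
    refine ⟨AEEqFun.const Ω (1 / 2 : ℝ), ?_, ?_, ?_⟩
    · exact AEEqFun.mk_le_mk _ _ |>.mpr (Filter.Eventually.of_forall fun w => by norm_num)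
    · exact AEEqFun.mk_le_mk _ _ |>.mpr (Filter.Eventually.of_forall fun w => by norm_num)
    · exact AEEqFun.mk_eq_mk.mpr (Filter.Eventually.of_forall fun w => by norm_num)
  neg a ha := by
    rw [← AEEqFun.coeFn_le] at ha ⊢
    filter_upwards [ha, AEEqFun.coeFn_zero (μ := P) (β := ℝ) (α := Ω),
      AEEqFun.coeFn_sub 1 a] with w h1 h2 h3
    rw [h3, Pi.sub_apply]
    rw [h2, Pi.zero_apply] at h1
    linarith
  zero_le_one := AEEqFun.mk_le_mk _ _ |>.mpr (Filter.Eventually.of_forall fun w => by norm_num)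

theorem sup_add_inf_L0 (a c : Ω →ₘ[P] ℝ) : (a ⊔ c) + (a ⊓ c) = a + c := by
  apply AEEqFun.ext
  filter_upwards [AEEqFun.coeFn_add (a ⊔ c) (a ⊓ c), AEEqFun.coeFn_add a c,
    AEEqFun.coeFn_sup a c, AEEqFun.coeFn_inf a c] with w h1 h2 h3 h4
  rw [h1, h2, Pi.add_apply, Pi.add_apply, h3, h4]
  exact max_add_min _ _

theorem idem_ind (e : Ω →ₘ[P] ℝ) (he : e * e = e) :
    ∃ (A : Set Ω) (hA : MeasurableSet A), e = ind P hA := by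
  have hA : MeasurableSet {w | e w = 1} := measurableSet_eq_fun e.measurable measurable_const
  refine ⟨_, hA, ?_⟩
  apply AEEqFun.ext
  filter_upwards [AEEqFun.coeFn_mul e e, AEEqFun.coeFn_mk (μ := P)
        ({w | e w = 1}.indicator fun _ => (1 : ℝ)) (aestronglyMeasurable_const.indicator hA)]
        with w h1 h2
  rw [ind, h2]
  rw [he, Pi.mul_apply] at h1
  by_cases h : e w = 1
  · simp [Set.indicator, h]
  · simp only [Set.indicator, Set.mem_ofPred_eq, h, if_false]
    by_contra h0
    exact h (mul_left_cancel₀ h0 (by linarith))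

theorem rat_smul_L0 (q : ℚ) (u : Ω →ₘ[P] ℝ) : q • u = AEEqFun.const Ω (q : ℝ) * u := by
  apply AEEqFun.ext
  filter_upwards [AEEqFun.coeFn_smul q u, AEEqFun.coeFn_mul (AEEqFun.const Ω (q : ℝ)) u,
    AEEqFun.coeFn_const (μ := P) (α := Ω) (q : ℝ)] with w h1 h2 h3
  rw [h1, h2, Pi.mul_apply, h3, Pi.smul_apply, Rat.smul_def]; rfl

/-- main comparison: `e` selects where `l ≥ q`, `m ∈ [0,1]`. -/
theorem homog01 {n : ℕ} (U : (Fin n → Ω →ₘ[P] ℝ) →+ (Fin n → Ω →ₘ[P] ℝ))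
    (hloc : ∀ (e : Ω →ₘ[P] ℝ) x y, e * e = e → e • x = e • y → e • U x = e • U y)
    (hseg : ∀ x (l : Ω →ₘ[P] ℝ), 0 ≤ l → l ≤ 1 →
      ∃ m : Ω →ₘ[P] ℝ, 0 ≤ m ∧ m ≤ 1 ∧ U (l • x) = m • U x)
    (x : Fin n → Ω →ₘ[P] ℝ) (l : Ω →ₘ[P] ℝ) (h0 : 0 ≤ l) (h1 : l ≤ 1) :
    U (l • x) = l • U x := by
  have hq : ∀ q : ℚ, U ((AEEqFun.const Ω (q : ℝ) : Ω →ₘ[P] ℝ) • x) =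
      (AEEqFun.const Ω (q : ℝ) : Ω →ₘ[P] ℝ) • U x := by
    intro q
    have h := map_rat_smul U q x
    have e1 : ∀ v : Fin n → Ω →ₘ[P] ℝ, q • v = (AEEqFun.const Ω (q : ℝ) : Ω →ₘ[P] ℝ) • v := fun v => by
      funext k; exact rat_smul_L0 q (v k)
    rwa [e1, e1] at h
  obtain ⟨m, m0, m1, hm⟩ := hseg x l h0 h1
  rw [hm]
  funext k
  have key : ∀ q : ℚ, 0 ≤ q → q ≤ 1 → ∀ᵐ w ∂P, U x k w ≠ 0 →
      ((q : ℝ) ≤ l w → (q : ℝ) ≤ m w) ∧ (l w ≤ q → m w ≤ q) := by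
    intro q q0 q1
    obtain ⟨c, hc⟩ : ∃ c : Ω →ₘ[P] ℝ, c = AEEqFun.const Ω (q : ℝ) := ⟨_, rfl⟩
    have hcw : ∀ᵐ w ∂P, c w = q := by
      rw [hc]; exact AEEqFun.coeFn_const (μ := P) (α := Ω) (q : ℝ)
    have hqq := hq q
    rw [← hc] at hqq
    have l0w := AEEqFun.coeFn_le.mpr h0
    have l1w := AEEqFun.coeFn_le.mpr h1
    have z := AEEqFun.coeFn_zero (μ := P) (β := ℝ) (α := Ω)
    have o := AEEqFun.coeFn_one (μ := P) (β := ℝ) (α := Ω)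
    have q0' : (0 : ℝ) ≤ q := by exact_mod_cast q0
    have q1' : (q : ℝ) ≤ 1 := by exact_mod_cast q1
    obtain ⟨v, v0, v1, hv⟩ := hseg x (l ⊔ c - c) (by
      rw [← AEEqFun.coeFn_le]
      filter_upwards [AEEqFun.coeFn_sub (l ⊔ c) c, AEEqFun.coeFn_sup l c, z] with w a1 a2 a3
      rw [a3, a1, Pi.sub_apply, a2]; simp) (by
      rw [← AEEqFun.coeFn_le]
      filter_upwards [AEEqFun.coeFn_sub (l ⊔ c) c, AEEqFun.coeFn_sup l c, o, hcw, l1w]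
        with w a1 a2 a3 a4 a5
      rw [a3] at a5
      rw [a3, a1, Pi.sub_apply, a2, a4]
      simp only [Pi.one_apply] at *
      have : max (l w) (q : ℝ) ≤ 1 := max_le a5 q1'
      linarith)
    obtain ⟨v', v0', v1', hv'⟩ := hseg x (c - l ⊓ c) (by
      rw [← AEEqFun.coeFn_le]
      filter_upwards [AEEqFun.coeFn_sub c (l ⊓ c), AEEqFun.coeFn_inf l c, z] with w a1 a2 a3
      rw [a3, a1, Pi.sub_apply, a2]; simp) (by
      rw [← AEEqFun.coeFn_le]
      filter_upwards [AEEqFun.coeFn_sub c (l ⊓ c), AEEqFun.coeFn_inf l c, o, z, hcw, l0w]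
        with w a1 a2 a3 a6 a4 a5
      rw [a6] at a5
      rw [a3, a1, Pi.sub_apply, a2, a4]
      simp only [Pi.one_apply, Pi.zero_apply] at *
      have : 0 ≤ min (l w) (q : ℝ) := le_min a5 q0'
      linarith)
    have hA : MeasurableSet {w | c w ≤ l w} := measurableSet_le c.measurable l.measurable
    have hB : MeasurableSet {w | l w ≤ c w} := measurableSet_le l.measurable c.measurable
    have hind : ∀ {A : Set Ω} (hA : MeasurableSet A), ind P hA * ind P hA = ind P hA := by
      intro A hA
      apply AEEqFun.ext
      filter_upwards [AEEqFun.coeFn_mul (ind P hA) (ind P hA), AEEqFun.coeFn_mk (μ := P)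
        (A.indicator fun _ => (1 : ℝ)) (aestronglyMeasurable_const.indicator hA)] with w h1 h2
      rw [h1, Pi.mul_apply, ind, h2]
      by_cases h : w ∈ A <;> simp [Set.indicator, h]
    have eA : ind P hA * (l ⊔ c - c) = ind P hA * (l - c) := by
      apply AEEqFun.ext
      filter_upwards [AEEqFun.coeFn_mul (ind P hA) (l ⊔ c - c),
        AEEqFun.coeFn_mul (ind P hA) (l - c), AEEqFun.coeFn_sub (l ⊔ c) c,
        AEEqFun.coeFn_sub l c, AEEqFun.coeFn_sup l c, AEEqFun.coeFn_mk (μ := P)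
        ({w | c w ≤ l w}.indicator fun _ => (1 : ℝ)) (aestronglyMeasurable_const.indicator hA)]
        with w a1 a2 a3 a4 a5 a6
      rw [a1, a2, Pi.mul_apply, Pi.mul_apply, a3, a4, Pi.sub_apply, Pi.sub_apply, a5, ind, a6]
      by_cases h : c w ≤ l w <;> simp [Set.indicator, h]
    have eB : ind P hB * (c - l ⊓ c) = ind P hB * (c - l) := by
      apply AEEqFun.ext
      filter_upwards [AEEqFun.coeFn_mul (ind P hB) (c - l ⊓ c),
        AEEqFun.coeFn_mul (ind P hB) (c - l), AEEqFun.coeFn_sub c (l ⊓ c),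
        AEEqFun.coeFn_sub c l, AEEqFun.coeFn_inf l c, AEEqFun.coeFn_mk (μ := P)
        ({w | l w ≤ c w}.indicator fun _ => (1 : ℝ)) (aestronglyMeasurable_const.indicator hB)]
        with w a1 a2 a3 a4 a5 a6
      rw [a1, a2, Pi.mul_apply, Pi.mul_apply, a3, a4, Pi.sub_apply, Pi.sub_apply, a5, ind, a6]
      by_cases h : l w ≤ c w <;> simp [Set.indicator, h]
    have kA := hloc (ind P hA) ((l ⊔ c - c) • x) ((l - c) • x) (hind hA)
      (by rw [smul_smul, smul_smul, eA])
    have kB := hloc (ind P hB) ((c - l ⊓ c) • x) ((c - l) • x) (hind hB)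
      (by rw [smul_smul, smul_smul, eB])
    rw [hv, sub_smul, map_sub, hm, hqq, ← sub_smul] at kA
    rw [hv', sub_smul, map_sub, hm, hqq, ← sub_smul] at kB
    have kA' : ind P hA * (v * U x k) = ind P hA * ((m - c) * U x k) := congrFun kA k
    have kB' : ind P hB * (v' * U x k) = ind P hB * ((c - m) * U x k) := congrFun kB k
    have kAw : ∀ᵐ w ∂P, (ind P hA * (v * U x k)) w = (ind P hA * ((m - c) * U x k)) w := by
      rw [kA']; exact Filter.Eventually.of_forall fun _ => rfl
    have kBw : ∀ᵐ w ∂P, (ind P hB * (v' * U x k)) w = (ind P hB * ((c - m) * U x k)) w := by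
      rw [kB']; exact Filter.Eventually.of_forall fun _ => rfl
    have gA : ∀ᵐ w ∂P, U x k w ≠ 0 → (q : ℝ) ≤ l w → (q : ℝ) ≤ m w := by
      filter_upwards [kAw, AEEqFun.coeFn_mul (ind P hA) (v * U x k),
        AEEqFun.coeFn_mul (ind P hA) ((m - c) * U x k), AEEqFun.coeFn_mul v (U x k),
        AEEqFun.coeFn_mul (m - c) (U x k), AEEqFun.coeFn_sub m c, hcw, z,
        AEEqFun.coeFn_le.mpr v0, AEEqFun.coeFn_mk (μ := P)
        ({w | c w ≤ l w}.indicator fun _ => (1 : ℝ)) (aestronglyMeasurable_const.indicator hA)]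
        with w a0 a1 a2 a3 a4 a5 a6 a7 a8 a9 hne hle
      rw [a7, Pi.zero_apply] at a8
      rw [a1, a2, Pi.mul_apply, Pi.mul_apply, a3, a4, Pi.mul_apply, Pi.mul_apply, a5,
        Pi.sub_apply, a6, ind, a9] at a0
      have : w ∈ {w | c w ≤ l w} := by simpa [a6] using hle
      rw [Set.indicator_of_mem this, one_mul, one_mul] at a0
      have := mul_right_cancel₀ hne a0
      linarith
    have gB : ∀ᵐ w ∂P, U x k w ≠ 0 → l w ≤ q → m w ≤ q := by
      filter_upwards [kBw, AEEqFun.coeFn_mul (ind P hB) (v' * U x k),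
        AEEqFun.coeFn_mul (ind P hB) ((c - m) * U x k), AEEqFun.coeFn_mul v' (U x k),
        AEEqFun.coeFn_mul (c - m) (U x k), AEEqFun.coeFn_sub c m, hcw, z,
        AEEqFun.coeFn_le.mpr v0', AEEqFun.coeFn_mk (μ := P)
        ({w | l w ≤ c w}.indicator fun _ => (1 : ℝ)) (aestronglyMeasurable_const.indicator hB)]
        with w a0 a1 a2 a3 a4 a5 a6 a7 a8 a9 hne hle
      rw [a7, Pi.zero_apply] at a8
      rw [a1, a2, Pi.mul_apply, Pi.mul_apply, a3, a4, Pi.mul_apply, Pi.mul_apply, a5,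
        Pi.sub_apply, a6, ind, a9] at a0
      have : w ∈ {w | l w ≤ c w} := by simpa [a6] using hle
      rw [Set.indicator_of_mem this, one_mul, one_mul] at a0
      have := mul_right_cancel₀ hne a0
      linarith
    filter_upwards [gA, gB] with w a b hne using ⟨a hne, b hne⟩
  have key' : ∀ᵐ w ∂P, ∀ q : ℚ, 0 ≤ q → q ≤ 1 → U x k w ≠ 0 →
      ((q : ℝ) ≤ l w → (q : ℝ) ≤ m w) ∧ (l w ≤ q → m w ≤ q) := by
    rw [ae_all_iff]
    intro q
    by_cases h : 0 ≤ q ∧ q ≤ 1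
    · filter_upwards [key q h.1 h.2] with w hw _ _ using hw
    · exact Filter.Eventually.of_forall fun w a b => absurd ⟨a, b⟩ h
  change m * U x k = l * U x k
  apply AEEqFun.ext
  filter_upwards [key', AEEqFun.coeFn_mul m (U x k), AEEqFun.coeFn_mul l (U x k),
    AEEqFun.coeFn_le.mpr h0, AEEqFun.coeFn_le.mpr h1, AEEqFun.coeFn_le.mpr m0,
    AEEqFun.coeFn_le.mpr m1, AEEqFun.coeFn_zero (μ := P) (β := ℝ) (α := Ω),
    AEEqFun.coeFn_one (μ := P) (β := ℝ) (α := Ω)] with w K a1 a2 b0 b1 c0 c1 z o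
  rw [z] at b0 c0
  rw [o] at b1 c1
  simp only [Pi.zero_apply, Pi.one_apply] at b0 b1 c0 c1
  rw [a1, a2, Pi.mul_apply, Pi.mul_apply]
  by_cases hne : U x k w = 0
  · rw [hne, mul_zero, mul_zero]
  congr 1
  rcases lt_trichotomy (m w) (l w) with h | h | h
  · obtain ⟨q, hq1, hq2⟩ := exists_rat_btwn h
    have := (K q (by exact_mod_cast c0.trans hq1.le) (by exact_mod_cast hq2.le.trans b1) hne).1 hq2.le
    linarith
  · exact h
  · obtain ⟨q, hq1, hq2⟩ := exists_rat_btwn h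
    have := (K q (by exact_mod_cast b0.trans hq1.le) (by exact_mod_cast hq2.le.trans c1) hne).2 hq1.le
    linarith

theorem homog {n : ℕ} (U : (Fin n → Ω →ₘ[P] ℝ) →+ (Fin n → Ω →ₘ[P] ℝ))
    (h01 : ∀ x (l : Ω →ₘ[P] ℝ), 0 ≤ l → l ≤ 1 → U (l • x) = l • U x)
    (x : Fin n → Ω →ₘ[P] ℝ) (l : Ω →ₘ[P] ℝ) : U (l • x) = l • U x := by
  have F := L0_facts (Ω := Ω) (P := P)
  have hge : ∀ l : Ω →ₘ[P] ℝ, 1 ≤ l → U (l • x) = l • U x := by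
    intro l hl
    obtain ⟨k, k0, k1, hk⟩ := F.inv l hl
    have := h01 (l • x) k k0 k1
    rw [smul_smul, hk, one_smul] at this
    rw [this, smul_smul, mul_comm, hk, one_smul]
  have hpos : ∀ l : Ω →ₘ[P] ℝ, 0 ≤ l → U (l • x) = l • U x := by
    intro l hl
    have e : l = (l ⊔ 1) + (l ⊓ 1) - 1 := by rw [sup_add_inf_L0]; ring
    have a := hge (l ⊔ 1) le_sup_right
    have b := h01 x (l ⊓ 1) (le_inf hl F.zero_le_one) inf_le_right
    rw [e, sub_smul, add_smul, map_sub, map_add, a, b, one_smul, sub_smul, add_smul, one_smul]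
  have e : l = (l ⊔ 0) + ((1 - l ⊓ 0) * (-1) + 1) := by
    linear_combination -sup_add_inf_L0 l 0
  have a := hpos (l ⊔ 0) le_sup_right
  have b := hge (1 - l ⊓ 0) (F.neg _ inf_le_right)
  have e2 : ∀ v : Fin n → Ω →ₘ[P] ℝ, l • v = (l ⊔ 0) • v - (1 - l ⊓ 0) • v + v := by
    intro v
    linear_combination (norm := module) e • v
  rw [e2, e2, map_add, map_sub, a, b]

end Concrete

/-- Corollary 3.7: for `n ≥ 2`, a bijection `T : (L⁰)ⁿ → (L⁰)ⁿ` with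
the local property which maps each `L⁰`-line segment onto an `L⁰`-line segment must be
an `L⁰`-affine linear map. -/
theorem segment_preserving_bijection_is_affine
    [IsProbabilityMeasure P] (n : ℕ) (hn : 2 ≤ n)
    (T : (Fin n → Ω →ₘ[P] ℝ) → (Fin n → Ω →ₘ[P] ℝ))
    (hbij : Function.Bijective T)
    (hloc : ∀ (x : Fin n → Ω →ₘ[P] ℝ) (A : Set Ω) (hA : MeasurableSet A),
        ind P hA • T (ind P hA • x) = ind P hA • T x)
    (hseg : ∀ x y : Fin n → Ω →ₘ[P] ℝ, x ≠ y →
        T '' {z | ∃ lam : Ω →ₘ[P] ℝ, 0 ≤ lam ∧ lam ≤ 1 ∧ z = lam • x + (1 - lam) • y}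
          = {z | ∃ lam : Ω →ₘ[P] ℝ, 0 ≤ lam ∧ lam ≤ 1 ∧
              z = lam • T x + (1 - lam) • T y}) :
    (∀ x y : Fin n → Ω →ₘ[P] ℝ,
        T (x + y) - T 0 = (T x - T 0) + (T y - T 0)) ∧
    (∀ (ξ : Ω →ₘ[P] ℝ) (x : Fin n → Ω →ₘ[P] ℝ),
        T (ξ • x) - T 0 = ξ • (T x - T 0)) := by
  have hloc' : ∀ (e : Ω →ₘ[P] ℝ) x y, e * e = e → e • x = e • y → e • T x = e • T y := by
    intro e x y he h
    obtain ⟨A, hA, rfl⟩ := idem_ind e he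
    rw [← hloc x A hA, h, hloc y A hA]
  have hsegT : ∀ (x d : Fin n → Ω →ₘ[P] ℝ) (l : Ω →ₘ[P] ℝ), 0 ≤ l → l ≤ 1 →
      ∃ m : Ω →ₘ[P] ℝ, 0 ≤ m ∧ m ≤ 1 ∧ T (x + l • d) = T x + m • (T (x + d) - T x) := by
    intro x d l h0 h1
    by_cases hd : x + d = x
    · have : d = 0 := by simpa using hd
      subst this
      exact ⟨l, h0, h1, by simp⟩
    · have h := hseg (x + d) x hd
      have hmem : T (x + l • d) ∈ T '' {z | ∃ lam : Ω →ₘ[P] ℝ, 0 ≤ lam ∧ lam ≤ 1 ∧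
          z = lam • (x + d) + (1 - lam) • x} := ⟨_, ⟨l, h0, h1, by module⟩, rfl⟩
      rw [h] at hmem
      obtain ⟨m, m0, m1, hm⟩ := hmem
      exact ⟨m, m0, m1, by rw [hm]; module⟩
  obtain ⟨S, hST, hTS⟩ := Function.bijective_iff_has_inverse.mp hbij
  have g : Good (Ω →ₘ[P] ℝ) T S := by
    refine ⟨hST, hTS, hloc', ?_, ?_⟩
    · intro x d l h0 h1
      obtain ⟨m, -, -, hm⟩ := hsegT x d l h0 h1
      exact ⟨m, hm⟩
    · intro x d l h0 h1
      by_cases hd : S (x + d) = S x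
      · have : x + d = x := by rw [← hTS (x + d), hd, hTS]
        have : d = 0 := by simpa using this
        subst this
        exact ⟨l, by simp⟩
      · have h := hseg (S (x + d)) (S x) hd
        rw [hTS, hTS] at h
        have hmem : x + l • d ∈ {z | ∃ lam : Ω →ₘ[P] ℝ, 0 ≤ lam ∧ lam ≤ 1 ∧
          z = lam • (x + d) + (1 - lam) • x} := ⟨l, h0, h1, by module⟩
        rw [← h] at hmem
        obtain ⟨y, ⟨m, m0, m1, hm⟩, hy⟩ := hmem
        refine ⟨m, ?_⟩
        rw [← hy, hST, hm]; module
  have hadd := additive hn L0_facts g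
  refine ⟨hadd, ?_⟩
  let U : (Fin n → Ω →ₘ[P] ℝ) →+ (Fin n → Ω →ₘ[P] ℝ) :=
    { toFun := fun x => T x - T 0
      map_zero' := sub_self _
      map_add' := hadd }
  intro ξ x
  refine homog U (homog01 U ?_ ?_) x ξ
  · intro e x y he h
    change e • (T x - T 0) = e • (T y - T 0)
    rw [smul_sub, smul_sub, hloc' e x y he h]
  · intro x l h0 h1
    obtain ⟨m, m0, m1, hm⟩ := hsegT 0 x l h0 h1
    rw [zero_add, zero_add] at hm
    refine ⟨m, m0, m1, ?_⟩
    change T (l • x) - T 0 = m • (T x - T 0)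
    rw [hm]; abel
end
end
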